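/- Let d ≥ 1 and p ≥ 2 be integers. Let u be a real polynomial in d variables of degree at most p in each variable, and let v be the unique real polynomial in d variables of degree at most p−1 in each variable that agrees with u at every point of the grid {x_1, …, x_p}^d of Gauss–Lobatto nodes. Then ∫_{[−1,1]^d} v(x)² dx ≤ (2 + 4/(2p−3))^d ∫_{[−1,1]^d} u(x)² dx. -/

import Mathlib

open Polynomial

/-- The `n`-th Legendre polynomial, given by the Rodrigues formula
`P_n(x) = 1/(2^n n!) dⁿ/dxⁿ (x² − 1)ⁿ`, normalized so that `P_n(1) = 1`. -/
noncomputable def legendre (n : ℕ) : Polynomial ℝ :=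
  Polynomial.C (1 / (2 ^ n * (n.factorial : ℝ))) *
    (⇑(Polynomial.derivative (R := ℝ)))^[n] ((Polynomial.X ^ 2 - 1) ^ n)

/-- The polynomial `χ_p(x) = P_{p−1}'(x) (x² − 1)`, whose roots are the `p`
Gauss–Lobatto nodes. -/
noncomputable def lobattoChi (p : ℕ) : Polynomial ℝ :=
  Polynomial.derivative (legendre (p - 1)) * (Polynomial.X ^ 2 - 1)

open MeasureTheory

/-!
Write `f = (X² - 1) ^ (p - 1)`. Up to nonzero constants, both `χ_p` and `P_p - P_{p-2}` are the
`(p - 2)`-nd derivative of `f`, and by Rolle's theorem this polynomial has `p` distinct roots.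

In one variable `u - v` has degree at most `p` and vanishes at the `p` nodes, so
`u - v = c (P_p - P_{p-2})` for some `c`. With `w = v - c P_{p-2}` we get `u = w + c P_p`, where
`w ⊥ P_p` by degree, and `v = w + c P_{p-2}`. For `r = ‖P_{p-2}‖² / ‖P_p‖² = (2p+1) / (2p-3)`,
Young's inequality yields
`‖v‖² ≤ (1 + r) ‖w‖² + (1 + 1/r) c² ‖P_{p-2}‖² = (1 + r) (‖w‖² + c² ‖P_p‖²) = (1 + r) ‖u‖²`,
and `1 + r = 2 + 4 / (2p-3)`.

In several variables the tensor-product interpolant is reached by interpolating in one coordinate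
after the other; by Tonelli, each step costs one factor of the one-dimensional estimate.
-/

open Set
open scoped ENNReal

section RodriguesDerivatives

variable {R : Type*} [CommRing R]

lemma derivative_X_sq_sub_one_pow_succ (n : ℕ) :
    derivative ((X ^ 2 - 1 : R[X]) ^ (n + 1)) =
      ((2 * (n + 1) : ℕ) : R[X]) * ((X ^ 2 - 1) ^ n * X) := by
  simp only [derivative_pow, derivative_sub, derivative_X, derivative_one, C_eq_natCast,
    Nat.add_one_sub_one, pow_one, sub_zero, mul_one]
  push_cast
  ring

lemma derivative_derivative_X_sq_sub_one_pow_add_two (n : ℕ) :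
    derivative (derivative ((X ^ 2 - 1 : R[X]) ^ (n + 2))) =
      ((2 * (n + 2) * (2 * n + 3) : ℕ) : R[X]) * (X ^ 2 - 1) ^ (n + 1) +
        ((4 * (n + 1) * (n + 2) : ℕ) : R[X]) * (X ^ 2 - 1) ^ n := by
  simp only [derivative_X_sq_sub_one_pow_succ, derivative_mul, derivative_natCast, derivative_X]
  push_cast
  ring

lemma X_sq_sub_one_mul_iterate_derivative (n : ℕ) :
    (X ^ 2 - 1) * derivative^[n + 2] ((X ^ 2 - 1 : R[X]) ^ (n + 1)) =
      (((n + 1) * (n + 2) : ℕ) : R[X]) * derivative^[n] ((X ^ 2 - 1 : R[X]) ^ (n + 1)) := by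
  set f : R[X] := (X ^ 2 - 1) ^ (n + 1) with hf
  have first_order : (X ^ 2 - 1) * derivative f = ((2 * (n + 1) : ℕ) : R[X]) * (f * X) := by
    rw [hf, derivative_X_sq_sub_one_pow_succ]
    ring
  have second_order : derivative^[2] f * X ^ 2 - derivative^[2] f =
      ((2 * n : ℕ) : R[X]) * (derivative f * X) + ((2 * (n + 1) : ℕ) : R[X]) * f := by
    have h := congrArg derivative first_order
    simp only [derivative_mul, derivative_sub, derivative_X_pow, derivative_one,
      derivative_natCast, derivative_X, C_eq_natCast, Nat.add_one_sub_one, pow_one, sub_zero] at h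
    simp only [Function.iterate_succ, Function.iterate_zero, Function.comp_apply, id_eq]
    push_cast at h ⊢
    linear_combination h
  have h := congrArg derivative^[n] second_order
  rw [iterate_derivative_sub, iterate_derivative_derivative_mul_X_sq, iterate_map_add,
    iterate_derivative_natCast_mul, iterate_derivative_natCast_mul,
    iterate_derivative_derivative_mul_X, ← Function.iterate_add_apply] at h
  have pred_mul : ((n * (n - 1) : ℕ) : R[X]) = n * n - n := by
    cases n <;> simp; ring
  simp only [nsmul_eq_mul, pred_mul] at h
  push_cast at h ⊢
  linear_combination h

lemma X_sq_sub_one_dvd_iterate_derivative {k n : ℕ} (hk : k < n) :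
    (X ^ 2 - 1 : R[X]) ∣ derivative^[k] ((X ^ 2 - 1 : R[X]) ^ n) :=
  (dvd_pow_self _ (Nat.sub_ne_zero_of_lt hk)).trans (pow_sub_dvd_iterate_derivative_pow _ n k)

lemma isRoot_iterate_derivative_X_sq_sub_one_pow {e : R} (he : e ^ 2 = 1) {k n : ℕ} (hk : k < n) :
    (derivative^[k] ((X ^ 2 - 1 : R[X]) ^ n)).IsRoot e :=
  IsRoot.dvd (by simp [he]) (X_sq_sub_one_dvd_iterate_derivative hk)

lemma natDegree_X_sq_sub_one_pow_le (n : ℕ) : ((X ^ 2 - 1 : R[X]) ^ n).natDegree ≤ n * 2 :=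
  natDegree_pow_le_of_le n (by compute_degree)

lemma coeff_iterate_derivative_X_sq_sub_one_pow (n : ℕ) :
    (derivative^[n] ((X ^ 2 - 1 : R[X]) ^ n)).coeff n = (n * 2).descFactorial n := by
  have leading : ((X ^ 2 - 1 : R[X]) ^ n).coeff (n * 2) = 1 := by
    rw [coeff_pow_of_natDegree_le (by compute_degree)]
    simp [coeff_one]
  rw [coeff_iterate_derivative, ← mul_two, leading, nsmul_one]

end RodriguesDerivatives

section Legendre

lemma legendre_zero : legendre 0 = 1 := by simp [legendre]

lemma coeff_legendre_self_ne_zero (n : ℕ) : (legendre n).coeff n ≠ 0 := by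
  have := Nat.pos_of_ne_zero (Nat.descFactorial_eq_zero_iff_lt.not.mpr (by lia : ¬ n * 2 < n))
  rw [legendre, coeff_C_mul, coeff_iterate_derivative_X_sq_sub_one_pow]
  positivity

lemma natDegree_legendre (n : ℕ) : (legendre n).natDegree = n := by
  refine natDegree_eq_of_le_of_coeff_ne_zero ?_ (coeff_legendre_self_ne_zero n)
  calc (legendre n).natDegree
      ≤ ((X ^ 2 - 1 : ℝ[X]) ^ n).natDegree - n :=
        (natDegree_C_mul_le _ _).trans (natDegree_iterate_derivative _ _)
    _ ≤ n := by have := natDegree_X_sq_sub_one_pow_le (R := ℝ) n; lia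

lemma legendre_ne_zero (n : ℕ) : legendre n ≠ 0 := fun h =>
  coeff_legendre_self_ne_zero n (by rw [h, coeff_zero])

lemma eval_legendre_succ {e : ℝ} (he : e ^ 2 = 1) (n : ℕ) :
    (legendre (n + 1)).eval e = e * (legendre n).eval e := by
  have vanish : n • (derivative^[n - 1] ((X ^ 2 - 1 : ℝ[X]) ^ n)).eval e = 0 := by
    rcases n.eq_zero_or_pos with rfl | hn
    · simp
    · rw [isRoot_iterate_derivative_X_sq_sub_one_pow he (Nat.sub_lt hn one_pos), smul_zero]
  simp only [legendre, Function.iterate_succ_apply, derivative_X_sq_sub_one_pow_succ,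
    iterate_derivative_natCast_mul, iterate_derivative_mul_X, eval_mul, eval_add, eval_C,
    eval_natCast, eval_smul, eval_X, vanish, Nat.factorial_succ]
  push_cast
  field_simp
  ring

lemma eval_legendre_of_sq_eq_one {e : ℝ} (he : e ^ 2 = 1) (n : ℕ) :
    (legendre n).eval e = e ^ n := by
  induction n with
  | zero => simp [legendre_zero]
  | succ n ih => rw [eval_legendre_succ he, ih, pow_succ']

lemma legendre_add_two_sub_legendre (n : ℕ) :
    legendre (n + 2) - legendre n =
      C ((2 * n + 3) / (2 ^ (n + 1) * (n + 1).factorial) : ℝ) *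
        derivative^[n] ((X ^ 2 - 1 : ℝ[X]) ^ (n + 1)) := by
  have expand : derivative^[n + 2] ((X ^ 2 - 1 : ℝ[X]) ^ (n + 2)) =
      C (2 * (n + 2) * (2 * n + 3) : ℝ) * derivative^[n] ((X ^ 2 - 1 : ℝ[X]) ^ (n + 1)) +
        C (4 * (n + 1) * (n + 2) : ℝ) * derivative^[n] ((X ^ 2 - 1 : ℝ[X]) ^ n) := by
    rw [Function.iterate_succ_apply, Function.iterate_succ_apply,
      derivative_derivative_X_sq_sub_one_pow_add_two, iterate_map_add,
      iterate_derivative_natCast_mul, iterate_derivative_natCast_mul, ← C_eq_natCast,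
      ← C_eq_natCast]
    push_cast
    rfl
  have coeff_succ : 1 / (2 ^ (n + 2) * (n + 2).factorial) * (2 * (n + 2) * (2 * n + 3)) =
      (2 * n + 3) / (2 ^ (n + 1) * (n + 1).factorial : ℝ) := by
    rw [Nat.factorial_succ (n + 1)]
    push_cast
    field_simp
    ring
  have coeff_self : 1 / (2 ^ (n + 2) * (n + 2).factorial) * (4 * (n + 1) * (n + 2)) =
      1 / (2 ^ n * n.factorial : ℝ) := by
    rw [Nat.factorial_succ (n + 1), Nat.factorial_succ n]
    push_cast
    field_simp
    ring
  rw [legendre, legendre, expand, mul_add, ← mul_assoc, ← mul_assoc, ← C_mul, ← C_mul, coeff_succ,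
    coeff_self, add_sub_cancel_right]

lemma lobattoChi_add_two (n : ℕ) :
    lobattoChi (n + 2) =
      C ((n + 1) * (n + 2) / (2 ^ (n + 1) * (n + 1).factorial) : ℝ) *
        derivative^[n] ((X ^ 2 - 1 : ℝ[X]) ^ (n + 1)) := by
  rw [lobattoChi, Nat.add_succ_sub_one, legendre, derivative_C_mul,
    ← Function.iterate_succ_apply' derivative, mul_assoc, mul_comm _ (X ^ 2 - 1),
    X_sq_sub_one_mul_iterate_derivative, ← mul_assoc, ← C_eq_natCast, ← C_mul]
  push_cast
  congr 2
  ring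

lemma lobattoChi_add_two_eq_legendre_sub (n : ℕ) :
    lobattoChi (n + 2) =
      C ((n + 1) * (n + 2) / (2 * n + 3) : ℝ) * (legendre (n + 2) - legendre n) := by
  rw [lobattoChi_add_two, legendre_add_two_sub_legendre, ← mul_assoc, ← C_mul]
  congr 2
  field_simp

lemma natDegree_lobattoChi {p : ℕ} (hp : 2 ≤ p) : (lobattoChi p).natDegree = p := by
  obtain ⟨n, rfl⟩ := Nat.exists_eq_add_of_le' hp
  rw [lobattoChi_add_two_eq_legendre_sub, natDegree_C_mul (by positivity),
    natDegree_sub_eq_left_of_natDegree_lt] <;> simp [natDegree_legendre]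

lemma lobattoChi_ne_zero {p : ℕ} (hp : 2 ≤ p) : lobattoChi p ≠ 0 :=
  ne_zero_of_natDegree_gt (n := 0) (by rw [natDegree_lobattoChi hp]; lia)

end Legendre

section LobattoNodes

/-- The Gauss–Lobatto nodes `x_1, …, x_p`, as the set of roots of `χ_p`. -/
noncomputable def lobattoNodes (p : ℕ) : Finset ℝ := (lobattoChi p).roots.toFinset

lemma mem_lobattoNodes {p : ℕ} (hp : 2 ≤ p) {x : ℝ} :
    x ∈ lobattoNodes p ↔ (lobattoChi p).eval x = 0 := by
  rw [lobattoNodes, Multiset.mem_toFinset, mem_roots (lobattoChi_ne_zero hp), IsRoot]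

lemma card_roots_add_card_le_card_roots_derivative_succ {q : ℝ[X]} {s : Finset ℝ}
    (hs : s ⊆ q.roots.toFinset) (hs' : s ⊆ (derivative q).roots.toFinset) :
    q.roots.toFinset.card + s.card ≤ (derivative q).roots.toFinset.card + 1 := by
  have rolle := card_roots_toFinset_le_card_roots_derivative_sdiff_roots_succ q
  have split := Finset.card_le_card (Finset.union_subset
    (Finset.sdiff_subset (s := (derivative q).roots.toFinset) (t := q.roots.toFinset)) hs')
  rw [Finset.card_union_of_disjoint
    (Finset.disjoint_of_subset_right hs Finset.sdiff_disjoint)] at split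
  lia

lemma iterate_derivative_X_sq_sub_one_pow_ne_zero {k n : ℕ} (hk : k < n) :
    derivative^[k] ((X ^ 2 - 1 : ℝ[X]) ^ n) ≠ 0 := by
  intro h
  refine legendre_ne_zero n ?_
  rw [legendre, ← Nat.sub_add_cancel hk.le, Function.iterate_add_apply, Nat.sub_add_cancel hk.le, h,
    iterate_derivative_zero, mul_zero]

lemma pair_subset_roots_iterate_derivative {k n : ℕ} (hk : k < n) :
    ({1, -1} : Finset ℝ) ⊆ (derivative^[k] ((X ^ 2 - 1 : ℝ[X]) ^ n)).roots.toFinset := by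
  intro e he
  rw [Multiset.mem_toFinset, mem_roots (iterate_derivative_X_sq_sub_one_pow_ne_zero hk)]
  refine isRoot_iterate_derivative_X_sq_sub_one_pow ?_ hk
  rcases Finset.mem_insert.mp he with rfl | he
  · norm_num
  · rw [Finset.mem_singleton.mp he]; norm_num

lemma add_two_le_card_roots_iterate_derivative {k n : ℕ} (hk : k < n) :
    k + 2 ≤ (derivative^[k] ((X ^ 2 - 1 : ℝ[X]) ^ n)).roots.toFinset.card := by
  have pair : ({1, -1} : Finset ℝ).card = 2 := Finset.card_pair (by norm_num)
  induction k with
  | zero => simpa [pair] using Finset.card_le_card (pair_subset_roots_iterate_derivative hk)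
  | succ k ih =>
    have ends := pair_subset_roots_iterate_derivative hk
    rw [Function.iterate_succ_apply'] at ends ⊢
    have rolle := card_roots_add_card_le_card_roots_derivative_succ
      (pair_subset_roots_iterate_derivative (k.lt_succ_self.trans hk)) ends
    have := ih (by lia)
    lia

lemma card_lobattoNodes {p : ℕ} (hp : 2 ≤ p) : (lobattoNodes p).card = p := by
  refine le_antisymm ?_ ?_
  · calc (lobattoNodes p).card
        ≤ (lobattoChi p).roots.card := Multiset.toFinset_card_le _
      _ ≤ (lobattoChi p).natDegree := card_roots' _
      _ = p := natDegree_lobattoChi hp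
  · obtain ⟨n, rfl⟩ := Nat.exists_eq_add_of_le' hp
    rw [lobattoNodes, lobattoChi_add_two, roots_C_mul _ (by positivity)]
    exact add_two_le_card_roots_iterate_derivative n.lt_succ_self

end LobattoNodes

section L2Form

/-- The `L²` inner product on `[-1, 1]`, as a bilinear form on real polynomials. -/
noncomputable def l2Form : LinearMap.BilinForm ℝ ℝ[X] :=
  LinearMap.mk₂ ℝ (fun q r => ∫ x in (-1 : ℝ)..1, (q * r).eval x)
    (fun q q' r => by
      simp only [add_mul, eval_add]
      exact intervalIntegral.integral_add ((q * r).continuous.intervalIntegrable _ _)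
        ((q' * r).continuous.intervalIntegrable _ _))
    (fun c q r => by simp)
    (fun q r r' => by
      simp only [mul_add, eval_add]
      exact intervalIntegral.integral_add ((q * r).continuous.intervalIntegrable _ _)
        ((q * r').continuous.intervalIntegrable _ _))
    (fun c q r => by simp)

lemma l2Form_apply (q r : ℝ[X]) : l2Form q r = ∫ x in (-1 : ℝ)..1, (q * r).eval x := rfl

lemma l2Form_comm (q r : ℝ[X]) : l2Form q r = l2Form r q := by
  rw [l2Form_apply, l2Form_apply, mul_comm]

lemma l2Form_mul_left (q r s : ℝ[X]) : l2Form (q * r) s = l2Form r (q * s) := by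
  rw [l2Form_apply, l2Form_apply, mul_left_comm, mul_assoc]

lemma l2Form_self_nonneg (q : ℝ[X]) : 0 ≤ l2Form q q :=
  intervalIntegral.integral_nonneg (by norm_num) fun x _ => by
    rw [eval_mul]; exact mul_self_nonneg _

lemma isPosSemidef_l2Form : l2Form.IsPosSemidef where
  eq := l2Form_comm
  nonneg := l2Form_self_nonneg

lemma l2Form_derivative_add (q r : ℝ[X]) :
    l2Form (derivative q) r + l2Form q (derivative r) =
      (q * r).eval 1 - (q * r).eval (-1) := by
  rw [l2Form_apply, l2Form_apply, ← intervalIntegral.integral_add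
    ((Polynomial.continuous _).intervalIntegrable _ _)
    ((Polynomial.continuous _).intervalIntegrable _ _)]
  simp only [← eval_add, ← derivative_mul]
  exact intervalIntegral.integral_eq_sub_of_hasDerivAt (fun x _ => (q * r).hasDerivAt x)
    ((Polynomial.continuous _).intervalIntegrable _ _)

lemma lintegral_sq_eval_eq_ofReal_l2Form (q : ℝ[X]) :
    ∫⁻ t in Icc (-1 : ℝ) 1, ENNReal.ofReal (q.eval t ^ 2) = ENNReal.ofReal (l2Form q q) := by
  rw [l2Form_apply, intervalIntegral.integral_of_le (by norm_num), ← integral_Icc_eq_integral_Ioc]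
  simp only [← sq, eval_pow]
  exact (ofReal_integral_eq_lintegral_ofReal (μ := volume.restrict (Icc (-1) 1))
    (q.continuous.pow 2).continuousOn.integrableOn_Icc (ae_of_all _ fun _ => sq_nonneg _)).symm

end L2Form

section LegendreOrthogonality

lemma degree_derivative_lt_of_degree_lt_succ {R : Type*} [Semiring R] {q : R[X]} {n : ℕ}
    (hq : q.degree < (n + 1 : ℕ)) : (derivative q).degree < n := by
  rw [degree_lt_iff_coeff_zero] at hq ⊢
  intro m hm
  rw [coeff_derivative, hq (m + 1) (by lia), zero_mul]

lemma l2Form_iterate_derivative_X_sq_sub_one_pow {k n : ℕ} (hk : k ≤ n) {q : ℝ[X]}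
    (hq : q.degree < k) : l2Form (derivative^[k] ((X ^ 2 - 1 : ℝ[X]) ^ n)) q = 0 := by
  induction k generalizing q with
  | zero => rw [degree_eq_bot.mp (Nat.WithBot.lt_zero_iff.mp hq), map_zero]
  | succ k ih =>
    have parts := l2Form_derivative_add (derivative^[k] ((X ^ 2 - 1 : ℝ[X]) ^ n)) q
    have ends (e : ℝ) (he : e ^ 2 = 1) :=
      (isRoot_iterate_derivative_X_sq_sub_one_pow he (Nat.lt_of_succ_le hk)).eq_zero
    rw [eval_mul, eval_mul, ends 1 (by norm_num), ends (-1) (by norm_num),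
      ih (by lia) (degree_derivative_lt_of_degree_lt_succ hq)] at parts
    rw [Function.iterate_succ_apply']
    linarith

lemma l2Form_legendre_of_degree_lt {n : ℕ} {q : ℝ[X]} (hq : q.degree < n) :
    l2Form (legendre n) q = 0 := by
  rw [legendre, ← smul_eq_C_mul, map_smul, LinearMap.smul_apply,
    l2Form_iterate_derivative_X_sq_sub_one_pow le_rfl hq, smul_zero]

lemma degree_X_mul_derivative_sub_lt {R : Type*} [CommRing R] {q : R[X]} {n : ℕ}
    (hq : q.natDegree ≤ n) : (X * derivative q - (n : R[X]) * q).degree < (n : WithBot ℕ) := by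
  rw [degree_lt_iff_coeff_zero]
  intro m hm
  have euler : (X * derivative q).coeff m = m * q.coeff m := by
    cases m <;> simp [coeff_derivative, mul_comm]
  rw [coeff_sub, euler, coeff_natCast_mul]
  rcases hm.eq_or_lt with rfl | hm
  · exact sub_self _
  · simp [coeff_eq_zero_of_natDegree_lt (hq.trans_lt hm)]

lemma l2Form_legendre_self (n : ℕ) : l2Form (legendre n) (legendre n) = 2 / (2 * n + 1) := by
  have orth : l2Form (legendre n) (X * derivative (legendre n)) =
      n * l2Form (legendre n) (legendre n) := by
    have h := l2Form_legendre_of_degree_lt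
      (degree_X_mul_derivative_sub_lt (natDegree_legendre n).le)
    rwa [map_sub, ← C_eq_natCast, ← smul_eq_C_mul, map_smul, smul_eq_mul, sub_eq_zero] at h
  have parts : l2Form (legendre n) (legendre n) +
      2 * l2Form (legendre n) (X * derivative (legendre n)) = 2 := by
    have h := l2Form_derivative_add (X * legendre n) (legendre n)
    have ends (e : ℝ) (he : e ^ 2 = 1) : (legendre n).eval e * (legendre n).eval e = 1 := by
      rw [eval_legendre_of_sq_eq_one he, ← mul_pow, ← sq, he, one_pow]
    rw [derivative_mul, derivative_X, one_mul, map_add, LinearMap.add_apply,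
      l2Form_comm (X * _), l2Form_mul_left] at h
    simp only [eval_mul, eval_X, mul_assoc, ends 1 (by norm_num), ends (-1) (by norm_num)] at h
    linarith
  rw [orth] at parts
  field_simp
  linarith

end LegendreOrthogonality

section OneVariableStability

lemma apply_add_self_le_of_isPosSemidef {R M : Type*} [CommRing R] [LinearOrder R]
    [IsStrictOrderedRing R] [AddCommGroup M] [Module R M] {B : LinearMap.BilinForm R M}
    (hB : B.IsPosSemidef) {a b w : M} {r : R} (hr : 0 < r) (haw : B a w = 0)
    (hab : B b b = r * B a a) : B (w + b) (w + b) ≤ (1 + r) * B (w + a) (w + a) := by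
  have hwa : B w a = 0 := by rw [hB.isSymm.eq, haw]
  have young := hB.isNonneg.nonneg (r • w - b)
  simp only [map_sub, map_add, map_smul, LinearMap.sub_apply, LinearMap.add_apply,
    LinearMap.smul_apply, smul_eq_mul, hB.isSymm.eq b w, hab, haw, hwa] at young ⊢
  refine le_of_mul_le_mul_left ?_ hr
  linear_combination young

lemma exists_eq_C_mul_of_eval_finset_eq_zero {F : Type*} [Field F] {s : Finset F} {q r : F[X]}
    (hq : q.natDegree ≤ s.card) (hr : r.natDegree = s.card) (hr₀ : r ≠ 0)
    (hqs : ∀ x ∈ s, q.eval x = 0) (hrs : ∀ x ∈ s, r.eval x = 0) : ∃ c, q = C c * r := by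
  refine ⟨q.coeff s.card / r.leadingCoeff, sub_eq_zero.mp ?_⟩
  refine eq_zero_of_degree_lt_of_eval_finset_eq_zero s ?_ fun x hx => by simp [hqs x hx, hrs x hx]
  rw [degree_lt_iff_coeff_zero]
  intro m hm
  rw [coeff_sub, coeff_C_mul]
  rcases hm.eq_or_lt with rfl | hm
  · rw [← hr, coeff_natDegree, div_mul_cancel₀ _ (leadingCoeff_ne_zero.mpr hr₀), sub_self]
  · rw [coeff_eq_zero_of_natDegree_lt (hq.trans_lt hm),
      coeff_eq_zero_of_natDegree_lt (hr.trans_lt hm), mul_zero, sub_self]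

lemma l2Form_add_smul_legendre_self_le {n : ℕ} {w : ℝ[X]} (hw : w.degree < (n + 2 : ℕ)) (c : ℝ) :
    l2Form (w + c • legendre n) (w + c • legendre n) ≤
      (1 + (2 * n + 5) / (2 * n + 1)) *
        l2Form (w + c • legendre (n + 2)) (w + c • legendre (n + 2)) := by
  refine apply_add_self_le_of_isPosSemidef isPosSemidef_l2Form (by positivity) ?_ ?_
  · rw [map_smul, LinearMap.smul_apply, l2Form_legendre_of_degree_lt hw, smul_zero]
  · simp only [map_smul, LinearMap.smul_apply, smul_eq_mul, l2Form_legendre_self]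
    push_cast
    field_simp
    ring

theorem l2Form_self_le_of_eqOn_lobattoNodes {p : ℕ} (hp : 2 ≤ p) {u v : ℝ[X]}
    (hu : u.natDegree ≤ p) (hv : v.degree < p)
    (huv : ∀ x ∈ lobattoNodes p, v.eval x = u.eval x) :
    l2Form v v ≤ (2 + 4 / (2 * (p : ℝ) - 3)) * l2Form u u := by
  have hv' : v.natDegree ≤ p := natDegree_le_of_degree_le hv.le
  obtain ⟨c, hc⟩ : ∃ c, u - v = C c * lobattoChi p := by
    refine exists_eq_C_mul_of_eval_finset_eq_zero (s := lobattoNodes p) ?_ ?_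
      (lobattoChi_ne_zero hp) (fun x hx => ?_) fun x hx => (mem_lobattoNodes hp).mp hx
    · exact (natDegree_sub_le_of_le hu hv').trans (by rw [card_lobattoNodes hp, max_self])
    · rw [natDegree_lobattoChi hp, card_lobattoNodes hp]
    · rw [eval_sub, huv x hx, sub_self]
  obtain ⟨n, rfl⟩ := Nat.exists_eq_add_of_le' hp
  obtain ⟨k, hk⟩ : ∃ k : ℝ, u - v = k • (legendre (n + 2) - legendre n) :=
    ⟨_, by rw [hc, lobattoChi_add_two_eq_legendre_sub, ← mul_assoc, ← C_mul, smul_eq_C_mul]⟩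
  have hw : (v - k • legendre n).degree < (n + 2 : ℕ) := by
    refine (degree_sub_le _ _).trans_lt (max_lt hv ((degree_smul_le _ _).trans_lt ?_))
    rw [degree_eq_natDegree (legendre_ne_zero n), natDegree_legendre]
    exact_mod_cast Nat.lt_add_of_pos_right two_pos
  have hu_eq : u = v - k • legendre n + k • legendre (n + 2) := by
    linear_combination hk + smul_sub k (legendre (n + 2)) (legendre n)
  have factor : 2 + 4 / (2 * ((n + 2 : ℕ) : ℝ) - 3) = 1 + (2 * n + 5) / (2 * n + 1) := by
    have h : 2 * ((n + 2 : ℕ) : ℝ) - 3 = 2 * n + 1 := by push_cast; ring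
    rw [h]
    field_simp
    ring
  have bound := l2Form_add_smul_legendre_self_le hw k
  rwa [sub_add_cancel, ← hu_eq, ← factor] at bound

end OneVariableStability

section CoordinateInterpolation

variable {ι F : Type*} [DecidableEq ι]

/-- `w` is a polynomial of degree less than `m` in the `j`-th coordinate alone, the other
coordinates being held fixed at arbitrary values. -/
def IsPolynomialInCoord [Semiring F] (j : ι) (m : ℕ) (w : (ι → F) → F) : Prop :=
  ∀ x, ∃ q ∈ degreeLT F m, ∀ t, w (Function.update x j t) = q.eval t

/-- Lagrange interpolation of `w` at the nodes `N` in the `j`-th coordinate alone; composing these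
over all coordinates gives the tensor-product interpolant. -/
noncomputable def interpCoord [Field F] [DecidableEq F] (N : Finset F) (j : ι)
    (w : (ι → F) → F) (x : ι → F) : F :=
  (Lagrange.interpolate N id fun t => w (Function.update x j t)).eval (x j)

lemma isPolynomialInCoord_eval [CommSemiring F] {u : MvPolynomial ι F} {j : ι} {m : ℕ}
    (hu : u.degreeOf j < m) : IsPolynomialInCoord j m fun x => MvPolynomial.eval x u := by
  intro x
  refine ⟨∑ k ∈ u.support, C (u.coeff k * (k.erase j).prod fun i e => x i ^ e) * X ^ k j,
    sum_mem fun k hk => ?_, fun t => ?_⟩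
  · refine mem_degreeLT.mpr ((degree_C_mul_X_pow_le _ _).trans_lt ?_)
    exact_mod_cast (MvPolynomial.monomial_le_degreeOf j hk).trans_lt hu
  · simp only [MvPolynomial.eval_eq, eval_finsetSum, eval_mul, eval_C, eval_pow, eval_X]
    refine Finset.sum_congr rfl fun k _ => ?_
    have split : ∏ i ∈ k.support, Function.update x j t i ^ k i =
        t ^ k j * (k.erase j).prod fun i e => Function.update x j t i ^ e := by
      simpa only [Finsupp.prod, Function.update_self] using (Finsupp.mul_prod_erase' k j
        (fun i e => Function.update x j t i ^ e) fun _ => pow_zero _).symm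
    have others : ((k.erase j).prod fun i e => Function.update x j t i ^ e) =
        (k.erase j).prod fun i e => x i ^ e := Finsupp.prod_congr fun i hi => by
      rw [Function.update_of_ne (Finset.ne_of_mem_erase (Finsupp.support_erase (f := k) ▸ hi))]
    rw [split, others, mul_assoc, mul_comm (t ^ k j)]

variable [Field F] [DecidableEq F] {N : Finset F} {i j : ι} {m : ℕ} {w w' : (ι → F) → F}
  {x : ι → F}

lemma interpCoord_update (t : F) :
    interpCoord N j w (Function.update x j t) =
      (Lagrange.interpolate N id fun s => w (Function.update x j s)).eval t := by
  simp only [interpCoord, Function.update_idem, Function.update_self]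

lemma interpCoord_eq_sum :
    interpCoord N j w x =
      ∑ t ∈ N, (Lagrange.basis N id t).eval (x j) * w (Function.update x j t) := by
  simp only [interpCoord, Lagrange.interpolate_apply, eval_finsetSum, eval_mul, eval_C, mul_comm]

lemma interpCoord_congr
    (h : ∀ t ∈ N, w (Function.update x j t) = w' (Function.update x j t)) :
    interpCoord N j w x = interpCoord N j w' x := by
  rw [interpCoord, interpCoord, Lagrange.interpolate_eq_of_values_eq_on _ _ h]

lemma IsPolynomialInCoord.interpCoord_eq_self (hw : IsPolynomialInCoord j N.card w) :
    interpCoord N j w = w := by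
  funext x
  obtain ⟨q, hq, hwq⟩ := hw x
  have interp : q = Lagrange.interpolate N id fun t => q.eval t :=
    Lagrange.eq_interpolate (injOn_id _) (mem_degreeLT.mp hq)
  simp only [interpCoord, hwq]
  rw [← interp, ← hwq, Function.update_eq_self]

lemma IsPolynomialInCoord.interpCoord (hij : i ≠ j) (hw : IsPolynomialInCoord i m w) :
    IsPolynomialInCoord i m (interpCoord N j w) := by
  intro x
  choose q hq hwq using fun t => hw (Function.update x j t)
  refine ⟨∑ t ∈ N, (Lagrange.basis N id t).eval (x j) • q t,
    sum_mem fun t _ => Submodule.smul_mem _ _ (hq t), fun s => ?_⟩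
  simp only [interpCoord_eq_sum, eval_finsetSum, eval_smul, smul_eq_mul,
    Function.update_of_ne hij.symm, Function.update_comm hij, hwq]

end CoordinateInterpolation

section TensorizedStability

/-- Interpolation at the nodes `N` is bounded in `L²(μ)` on polynomials of degree less than `m`,
with `K` bounding the square of its norm. -/
def IsInterpStable (μ : Measure ℝ) (N : Finset ℝ) (m : ℕ) (K : ℝ≥0∞) : Prop :=
  ∀ q ∈ degreeLT ℝ m,
    ∫⁻ t, .ofReal ((Lagrange.interpolate N id fun s => q.eval s).eval t ^ 2) ∂μ ≤
      K * ∫⁻ t, .ofReal (q.eval t ^ 2) ∂μ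

lemma isInterpStable_lobattoNodes {p : ℕ} (hp : 2 ≤ p) :
    IsInterpStable (volume.restrict (Icc (-1) 1)) (lobattoNodes p) (p + 1)
      (.ofReal (2 + 4 / (2 * p - 3))) := by
  intro q hq
  rw [lintegral_sq_eval_eq_ofReal_l2Form, lintegral_sq_eval_eq_ofReal_l2Form,
    ← ENNReal.ofReal_mul' (l2Form_self_nonneg q)]
  refine ENNReal.ofReal_le_ofReal (l2Form_self_le_of_eqOn_lobattoNodes hp ?_ ?_ fun x hx => ?_)
  · exact natDegree_le_of_degree_le (Order.lt_succ_iff.mp (mem_degreeLT.mp hq))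
  · simpa only [card_lobattoNodes hp] using Lagrange.degree_interpolate_lt (s := lobattoNodes p)
      (v := id) (fun s => q.eval s) (injOn_id _)
  · exact Lagrange.eval_interpolate_at_node (v := id) _ (injOn_id _) hx

variable {ι : Type*}

lemma measurable_interpCoord [DecidableEq ι] {N : Finset ℝ} {j : ι} {w : (ι → ℝ) → ℝ}
    (hw : Measurable w) : Measurable (interpCoord N j w) := by
  have h : interpCoord N j w = fun x =>
      ∑ t ∈ N, (Lagrange.basis N id t).eval (x j) * w (Function.update x j t) :=
    funext fun _ => interpCoord_eq_sum
  rw [h]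
  refine Finset.measurable_fun_sum _ fun t _ => ?_
  exact ((Lagrange.basis N id t).continuous.measurable.comp (measurable_pi_apply j)).mul
    (hw.comp measurable_update_left)

variable [Fintype ι] {μ : ι → Measure ℝ} [∀ i, SigmaFinite (μ i)]

lemma lintegral_interpCoord_sq_le [DecidableEq ι] {N : Finset ℝ} {j : ι} {m : ℕ} {K : ℝ≥0∞}
    (hK : IsInterpStable (μ j) N m K) {w : (ι → ℝ) → ℝ} (hw : Measurable w)
    (hwj : IsPolynomialInCoord j m w) :
    ∫⁻ x, .ofReal (interpCoord N j w x ^ 2) ∂Measure.pi μ ≤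
      K * ∫⁻ x, .ofReal (w x ^ 2) ∂Measure.pi μ := by
  have sq_meas {f : (ι → ℝ) → ℝ} (hf : Measurable f) :
      Measurable fun x => ENNReal.ofReal (f x ^ 2) := (hf.pow_const 2).ennreal_ofReal
  rw [← lintegral_const_mul _ (sq_meas hw)]
  refine lintegral_le_of_lmarginal_le {j} (sq_meas (measurable_interpCoord hw))
    ((sq_meas hw).const_mul K) ?_
  rw [lmarginal_singleton, lmarginal_singleton]
  intro x
  obtain ⟨q, hq, hwq⟩ := hwj x
  simp only [interpCoord_update, hwq]
  rw [lintegral_const_mul _ (q.continuous.measurable.pow_const 2).ennreal_ofReal]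
  exact hK q hq

theorem lintegral_sq_le_prod_mul_of_eqOn_grid [DecidableEq ι] {N : ι → Finset ℝ} {m : ι → ℕ}
    {K : ι → ℝ≥0∞} {S : Finset ι} (hK : ∀ i ∈ S, IsInterpStable (μ i) (N i) (m i) (K i))
    {v w : (ι → ℝ) → ℝ} (hw : Measurable w) (hwS : ∀ i ∈ S, IsPolynomialInCoord i (m i) w)
    (hvS : ∀ i ∈ S, IsPolynomialInCoord i (N i).card v)
    (hvw : ∀ x, (∀ i ∈ S, x i ∈ N i) → v x = w x) :
    ∫⁻ x, .ofReal (v x ^ 2) ∂Measure.pi μ ≤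
      (∏ i ∈ S, K i) * ∫⁻ x, .ofReal (w x ^ 2) ∂Measure.pi μ := by
  induction S using Finset.induction_on generalizing w with
  | empty => simp [funext fun x => hvw x (by simp)]
  | insert j S hj ih =>
    rw [Finset.forall_mem_insert] at hK hwS hvS
    have agree : ∀ x, (∀ i ∈ S, x i ∈ N i) → v x = interpCoord (N j) j w x := by
      intro x hx
      rw [← congrFun hvS.1.interpCoord_eq_self x]
      refine interpCoord_congr fun t ht => hvw _ fun i hi => ?_
      rcases eq_or_ne i j with rfl | hij
      · rwa [Function.update_self]
      · rw [Function.update_of_ne hij]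
        exact hx i (Finset.mem_of_mem_insert_of_ne hi hij)
    calc ∫⁻ x, .ofReal (v x ^ 2) ∂Measure.pi μ
        ≤ (∏ i ∈ S, K i) * ∫⁻ x, .ofReal (interpCoord (N j) j w x ^ 2) ∂Measure.pi μ :=
          ih hK.2 (measurable_interpCoord hw)
            (fun i hi => (hwS.2 i hi).interpCoord (ne_of_mem_of_not_mem hi hj)) hvS.2 agree
      _ ≤ (∏ i ∈ S, K i) * (K j * ∫⁻ x, .ofReal (w x ^ 2) ∂Measure.pi μ) := by
          gcongr
          exact lintegral_interpCoord_sq_le hK.1 hw hwS.1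
      _ = (∏ i ∈ insert j S, K i) * ∫⁻ x, .ofReal (w x ^ 2) ∂Measure.pi μ := by
          rw [Finset.prod_insert hj, ← mul_assoc, mul_comm (K j)]

lemma ofReal_setIntegral_sq_eval (u : MvPolynomial ι ℝ) :
    ENNReal.ofReal (∫ x in univ.pi fun _ : ι => Icc (-1 : ℝ) 1, MvPolynomial.eval x u ^ 2) =
      ∫⁻ x, .ofReal (MvPolynomial.eval x u ^ 2)
        ∂Measure.pi fun _ : ι => volume.restrict (Icc (-1 : ℝ) 1) := by
  rw [← Measure.restrict_pi_pi, ← volume_pi]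
  exact ofReal_integral_eq_lintegral_ofReal
    (((MvPolynomial.continuous_eval u).pow 2).continuousOn.integrableOn_compact
      (isCompact_univ_pi fun _ => isCompact_Icc)) (ae_of_all _ fun _ => sq_nonneg _)

end TensorizedStability

theorem gauss_lobatto_interp_l2_stability_multi_general {ι : Type*} [Fintype ι] {p : ι → ℕ}
    (hp : ∀ i, 2 ≤ p i) {u v : MvPolynomial ι ℝ}
    (hu : ∀ i, u.degreeOf i ≤ p i) (hv : ∀ i, v.degreeOf i ≤ p i - 1)
    (hinterp : ∀ x : ι → ℝ, (∀ i, (lobattoChi (p i)).eval (x i) = 0) →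
      MvPolynomial.eval x v = MvPolynomial.eval x u) :
    ∫ x in univ.pi fun _ : ι => Icc (-1 : ℝ) 1, MvPolynomial.eval x v ^ 2 ≤
      (∏ i, (2 + 4 / (2 * (p i : ℝ) - 3))) *
        ∫ x in univ.pi fun _ : ι => Icc (-1 : ℝ) 1, MvPolynomial.eval x u ^ 2 := by
  classical
  have factor_nonneg (i : ι) : 0 ≤ 2 + 4 / (2 * (p i : ℝ) - 3) := by
    have : (2 : ℝ) ≤ p i := mod_cast hp i
    have : 0 ≤ 2 * (p i : ℝ) - 3 := by linarith
    positivity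
  have integral_nonneg :
      0 ≤ ∫ x in univ.pi fun _ : ι => Icc (-1 : ℝ) 1, MvPolynomial.eval x u ^ 2 :=
    integral_nonneg fun _ => sq_nonneg _
  have prod_nonneg := Finset.prod_nonneg fun i (_ : i ∈ Finset.univ) => factor_nonneg i
  have hvp (i : ι) : v.degreeOf i < (lobattoNodes (p i)).card := by
    have := hv i
    have := hp i
    rw [card_lobattoNodes (hp i)]
    lia
  rw [← ENNReal.ofReal_le_ofReal_iff (mul_nonneg prod_nonneg integral_nonneg),
    ENNReal.ofReal_mul' integral_nonneg,
    ENNReal.ofReal_prod_of_nonneg fun i _ => factor_nonneg i, ofReal_setIntegral_sq_eval,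
    ofReal_setIntegral_sq_eval]
  exact lintegral_sq_le_prod_mul_of_eqOn_grid
    (fun i _ => isInterpStable_lobattoNodes (hp i))
    (MvPolynomial.continuous_eval u).measurable
    (fun i _ => isPolynomialInCoord_eval (Nat.lt_succ_of_le (hu i)))
    (fun i _ => isPolynomialInCoord_eval (hvp i))
    fun x hx => hinterp x fun i => (mem_lobattoNodes (hp i)).mp (hx i (Finset.mem_univ i))

/-- L² stability of tensor-product Gauss–Lobatto interpolation in `d` dimensions:
if `u` is a polynomial in `d` variables of degree at most `p` in each variable, and
`v` is the polynomial of degree at most `p − 1` in each variable agreeing with `u`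
at every point of the grid of Gauss–Lobatto nodes (the points all of whose
coordinates are roots of `χ_p`), then
`∫_{[−1,1]^d} v² ≤ (2 + 4/(2p−3))^d ∫_{[−1,1]^d} u²`. -/
theorem gauss_lobatto_interp_l2_stability_multi (d p : ℕ) (hd : 1 ≤ d) (hp : 2 ≤ p)
    (u v : MvPolynomial (Fin d) ℝ)
    (hu : ∀ i, u.degreeOf i ≤ p) (hv : ∀ i, v.degreeOf i ≤ p - 1)
    (hinterp : ∀ x : Fin d → ℝ, (∀ i, (lobattoChi p).eval (x i) = 0) →
      MvPolynomial.eval x v = MvPolynomial.eval x u) :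
    ∫ x in Set.univ.pi fun _ : Fin d => Set.Icc (-1 : ℝ) 1, (MvPolynomial.eval x v) ^ 2 ≤
      (2 + 4 / (2 * (p : ℝ) - 3)) ^ d *
        ∫ x in Set.univ.pi fun _ : Fin d => Set.Icc (-1 : ℝ) 1,
          (MvPolynomial.eval x u) ^ 2 := by
  simpa only [Finset.prod_const, Finset.card_univ, Fintype.card_fin] using
    gauss_lobatto_interp_l2_stability_multi_general (fun _ => hp) hu hv hinterp
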